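/- Let k be a perfect field of characteristic p > 0, let m > 2, and let 1 < a ≤ b be fixed integers with (a, b) ≠ (2, 2). For an integer n ≥ b set f_n = x_1^a + x_2^b + x_3^n + x_4^n + … + x_m^n ∈ k[x_1, …, x_m]. Suppose p ≡ 1 (mod lcm(a, b)) and p^d ≤ n < p^{d+1} for some positive integer d. Then either fpt(f_n) = 1/a + 1/b + (m−2)/n, or there exists an integer L ≥ d such that fpt(f_n) = ⟨1/a⟩_L + ⟨1/b⟩_L + (m−2)·⟨1/n⟩_L + p^{−L}, and in the latter case the denominator of fpt(f_n) in lowest terms is p^L. -/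

import Mathlib

open MvPolynomial Filter

/-- The `q`-th Frobenius power of the maximal ideal `(x_1, …, x_m)`. -/
noncomputable def frobeniusPower (k : Type*) [CommRing k] (m q : ℕ) :
    Ideal (MvPolynomial (Fin m) k) :=
  Ideal.span (Set.range fun i : Fin m => (X i : MvPolynomial (Fin m) k) ^ q)

/-- `ν_f(q) = max { N : f^N ∉ (x_1^q, …, x_m^q) }`. -/
noncomputable def nu {k : Type*} [CommRing k] {m : ℕ}
    (f : MvPolynomial (Fin m) k) (q : ℕ) : ℕ :=
  sSup {N : ℕ | f ^ N ∉ frobeniusPower k m q}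

/-- The `e`-th truncation `⟨α⟩_e` of the nonterminating base-`p` expansion of
`α ∈ ℚ ∩ (0,1]`: explicitly `⟨α⟩_e = (⌈p^e α⌉ - 1)/p^e`. -/
noncomputable def trunc (p : ℕ) (α : ℚ) (e : ℕ) : ℚ :=
  ((⌈(p : ℚ) ^ e * α⌉ : ℚ) - 1) / (p : ℚ) ^ e

/-!
In `f ^ N` the monomials of the multinomial expansion are pairwise distinct, and by Legendre's
formula the coefficient of `∏ x_i ^ (A i * c i)` is nonzero exactly when the `c i` add without
carries in base `p`. Hence `f ^ N ∉ 𝔪^[p^e]` means that `N` is a carry-free sum of numbers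
`c i ≤ p ^ e * ⟨1 / A i⟩_e`. If the digits of the `1 / A i` never carry, `ν_f(p ^ e)` is the sum of
these bounds. If the first carry is at place `L + 1`, the best `N` has the leading digits of
`∑ i, ⟨1 / A i⟩_L` followed by digits `p - 1`, which gives `fpt f = ∑ i, ⟨1 / A i⟩_L + p ^ (-L)`
(Hernández).

If `p` divides the numerator of this value, the digits at place `L` add up to `p - 1`, and the same
value is obtained from `L - 1`. For `p ≡ 1 mod lcm(a, b)` all digits of `1 / a` and `1 / b` are
`(p - 1) / a` and `(p - 1) / b`, with sum at most `p - 2`, while `⟨1 / n⟩_d = 0`; so the descent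
stops no earlier than at `d`.
-/

open Finset

theorem sum_div_le_div_sum {ι : Type*} (s : Finset ι) (c : ι → ℕ) (q : ℕ) :
    ∑ i ∈ s, c i / q ≤ (∑ i ∈ s, c i) / q := by
  obtain rfl | hq := q.eq_zero_or_pos
  · simp
  rw [Nat.le_div_iff_mul_le hq, sum_mul]
  exact sum_le_sum fun i _ => Nat.div_mul_le_self _ _

section CarryFree

variable {ι : Type*} [Fintype ι] {p : ℕ}

/-- The base-`p` addition of the numbers `c i` involves no carry. The carry into the place of
`p ^ t` is `(∑ i, c i) / p ^ t - ∑ i, c i / p ^ t`, so the condition is that all these vanish. -/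
def CarryFree (p : ℕ) (c : ι → ℕ) : Prop :=
  ∀ t, ∑ i, c i / p ^ t = (∑ i, c i) / p ^ t

theorem factorization_multinomial_add (hp : p.Prime) (c : ι → ℕ) {b : ℕ}
    (hb : Nat.log p (∑ i, c i) < b) :
    ∑ t ∈ Ico 1 b, ∑ i, c i / p ^ t + (Nat.multinomial univ c).factorization p =
      ∑ t ∈ Ico 1 b, (∑ i, c i) / p ^ t := by
  have hlog (i : ι) : Nat.log p (c i) < b :=
    (Nat.log_mono_right (single_le_sum_of_canonicallyOrdered (mem_univ i))).trans_lt hb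
  have hfactorial (i : ι) (_ : i ∈ univ) : (c i).factorial ≠ 0 := Nat.factorial_ne_zero _
  rw [← Nat.factorization_factorial hp hb, ← Nat.multinomial_spec,
    Nat.factorization_mul (prod_ne_zero_iff.mpr hfactorial) (Nat.multinomial_pos _ _).ne',
    Finsupp.add_apply, Nat.factorization_prod_apply hfactorial, sum_comm]
  exact congrArg (· + _) (sum_congr rfl fun i _ => (Nat.factorization_factorial hp (hlog i)).symm)

theorem not_dvd_multinomial_iff_carryFree (hp : p.Prime) {c : ι → ℕ} :
    ¬ p ∣ Nat.multinomial univ c ↔ CarryFree p c := by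
  set b := (∑ i, c i) + 1
  have hlegendre := factorization_multinomial_add hp c (b := b)
    (Nat.lt_succ_of_le (Nat.log_le_self p _))
  have hle (t : ℕ) : ∑ i, c i / p ^ t ≤ (∑ i, c i) / p ^ t := sum_div_le_div_sum _ _ _
  calc ¬ p ∣ Nat.multinomial univ c
      ↔ (Nat.multinomial univ c).factorization p = 0 := by
        simp [Nat.factorization_eq_zero_iff, hp, (Nat.multinomial_pos _ _).ne']
    _ ↔ ∑ t ∈ Ico 1 b, ∑ i, c i / p ^ t = ∑ t ∈ Ico 1 b, (∑ i, c i) / p ^ t := by omega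
    _ ↔ ∀ t ∈ Ico 1 b, ∑ i, c i / p ^ t = (∑ i, c i) / p ^ t :=
        sum_eq_sum_iff_of_le fun t _ => hle t
    _ ↔ CarryFree p c := by
        refine ⟨fun h t => ?_, fun h t _ => h t⟩
        obtain rfl | ht := t.eq_zero_or_pos
        · simp
        by_cases htb : t < b
        · exact h t (mem_Ico.mpr ⟨ht, htb⟩)
        · have hlt : ∑ i, c i < p ^ t :=
            (Nat.lt_of_succ_le (not_lt.mp htb)).trans (Nat.lt_pow_self hp.one_lt)
          exact (hle t).antisymm (by simp [Nat.div_eq_of_lt hlt])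

theorem mul_add_div_pow_succ {x y : ℕ} (hy : y < p) (t : ℕ) :
    (p * x + y) / p ^ (t + 1) = x / p ^ t := by
  rw [pow_succ', ← Nat.div_div_eq_div_mul, Nat.mul_add_div (Nat.zero_lt_of_lt hy),
    Nat.div_eq_of_lt hy, add_zero]

theorem CarryFree.mul_add {c r : ι → ℕ} (hc : CarryFree p c) (hr : ∑ i, r i < p) :
    CarryFree p fun i => p * c i + r i := by
  rintro (_ | t)
  · simp
  have hri (i : ι) : r i < p := (single_le_sum_of_canonicallyOrdered (mem_univ i)).trans_lt hr
  simp only [sum_add_distrib, ← mul_sum, mul_add_div_pow_succ hr, mul_add_div_pow_succ (hri _),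
    hc t]

end CarryFree

section TruncNum

variable {p a : ℕ}

/-- The integer `p ^ e * ⟨1 / a⟩_e`, the numerator of the `e`-th truncation of `1 / a`. -/
def truncNum (p a e : ℕ) : ℕ :=
  (p ^ e - 1) / a

/-- The `e`-th digit of the nonterminating base-`p` expansion of `1 / a`, for `e ≥ 1`; at `e = 0`
it is `0`. -/
def truncDigit (p a e : ℕ) : ℕ :=
  truncNum p a e % p

@[simp]
theorem truncNum_zero : truncNum p a 0 = 0 := by
  simp [truncNum]

@[simp]
theorem truncDigit_zero : truncDigit p a 0 = 0 := by
  simp [truncDigit]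

theorem le_truncNum_iff (hp : 0 < p) (ha : 0 < a) {e c : ℕ} :
    c ≤ truncNum p a e ↔ a * c < p ^ e := by
  rw [truncNum, Nat.le_div_iff_mul_le ha, mul_comm, Nat.le_sub_one_iff_lt (pow_pos hp e)]

theorem truncNum_eq_zero_of_pow_le (hp : 0 < p) {e : ℕ} (h : p ^ e ≤ a) : truncNum p a e = 0 :=
  Nat.div_eq_of_lt ((Nat.sub_one_lt (pow_pos hp e).ne').trans_le h)

theorem truncNum_add_div_pow (hp : 0 < p) (e t : ℕ) :
    truncNum p a (e + t) / p ^ t = truncNum p a e := by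
  have hpow : (p ^ (e + t) - 1) / p ^ t = p ^ e - 1 := by
    have := Nat.mul_sub_div 0 (p ^ t) (p ^ e) (by positivity)
    simpa [pow_add, mul_comm] using this
  rw [truncNum, truncNum, Nat.div_div_eq_div_mul, mul_comm, ← Nat.div_div_eq_div_mul, hpow]

theorem truncNum_succ (hp : 0 < p) (e : ℕ) :
    truncNum p a (e + 1) = p * truncNum p a e + truncDigit p a (e + 1) := by
  rw [← truncNum_add_div_pow hp e 1, pow_one, truncDigit, Nat.div_add_mod]

theorem truncDigit_succ_of_dvd (ha : a ∣ p - 1) (hp : 0 < p) (e : ℕ) :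
    truncDigit p a (e + 1) = (p - 1) / a := by
  have hsplit : p ^ (e + 1) - 1 = p * (p ^ e - 1) + (p - 1) := by
    have := pow_pos hp e
    rw [pow_succ', Nat.mul_sub_one]
    have := Nat.le_mul_of_pos_right p this
    omega
  have hdvd : a ∣ p * (p ^ e - 1) := (ha.trans (Nat.sub_one_dvd_pow_sub_one p e)).mul_left p
  rw [truncDigit, truncNum, hsplit, Nat.add_div_of_dvd_right hdvd,
    Nat.mul_div_assoc _ (ha.trans (Nat.sub_one_dvd_pow_sub_one p e)), Nat.mul_add_mod]
  exact Nat.mod_eq_of_lt ((Nat.div_le_self _ _).trans_lt (Nat.sub_one_lt hp.ne'))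

theorem natCeil_pow_div {K : Type*} [Field K] [LinearOrder K] [IsStrictOrderedRing K]
    [FloorSemiring K] (hp : 0 < p) (ha : 0 < a) (e : ℕ) :
    ⌈(p : K) ^ e / a⌉₊ = truncNum p a e + 1 := by
  have haK : (0 : K) < a := mod_cast ha
  rw [Nat.ceil_eq_iff (Nat.succ_ne_zero _), lt_div_iff₀ haK, div_le_iff₀ haK]
  refine ⟨mod_cast mul_comm a _ ▸ (le_truncNum_iff hp ha).mp le_rfl, ?_⟩
  exact_mod_cast mul_comm a _ ▸ not_lt.mp (mt (le_truncNum_iff hp ha).mpr (Nat.not_succ_le_self _))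

theorem trunc_one_div (hp : 0 < p) (ha : 0 < a) (e : ℕ) :
    trunc p (1 / (a : ℚ)) e = (truncNum p a e : ℚ) / (p : ℚ) ^ e := by
  have hceil : ⌈(p : ℚ) ^ e * (1 / a)⌉ = truncNum p a e + 1 := by
    rw [mul_one_div, ← Int.natCast_ceil_eq_ceil (by positivity), natCeil_pow_div hp ha,
      Nat.cast_succ]
  rw [trunc, hceil, Int.cast_add, Int.cast_natCast, Int.cast_one, add_sub_cancel_right]

theorem tendsto_inv_pow_atTop_zero (hp : 1 < p) :
    Tendsto (fun e : ℕ => ((p : ℝ) ^ e)⁻¹) atTop (nhds 0) :=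
  (tendsto_pow_atTop_atTop_of_one_lt (mod_cast hp)).inv_tendsto_atTop

theorem tendsto_truncNum_div_pow (hp : 1 < p) (ha : 0 < a) :
    Tendsto (fun e : ℕ => (truncNum p a e : ℝ) / (p : ℝ) ^ e) atTop (nhds (1 / (a : ℝ))) := by
  have hceil := (tendsto_nat_ceil_mul_div_atTop (R := ℝ) (a := 1 / a) (by positivity)).comp
    (tendsto_pow_atTop_atTop_of_one_lt (r := (p : ℝ)) (mod_cast hp))
  have hsub := hceil.sub (tendsto_inv_pow_atTop_zero hp)
  rw [sub_zero] at hsub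
  refine hsub.congr fun e => ?_
  rw [Function.comp_apply, one_div_mul_eq_div, natCeil_pow_div (by omega) ha, Nat.cast_succ,
    add_div, one_div, add_sub_cancel_right]

end TruncNum

section TruncSum

variable {ι : Type*} [Fintype ι] {p : ℕ} {A : ι → ℕ}

theorem sum_truncNum_succ (hp : 0 < p) (A : ι → ℕ) (e : ℕ) :
    ∑ i, truncNum p (A i) (e + 1) =
      p * ∑ i, truncNum p (A i) e + ∑ i, truncDigit p (A i) (e + 1) := by
  simp only [truncNum_succ hp, sum_add_distrib, mul_sum]

theorem dvd_sum_truncNum_add_one_iff (p : ℕ) (A : ι → ℕ) (e : ℕ) :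
    p ∣ ∑ i, truncNum p (A i) e + 1 ↔ p ∣ ∑ i, truncDigit p (A i) e + 1 := by
  have hsplit : ∑ i, truncNum p (A i) e + 1 =
      p * ∑ i, truncNum p (A i) e / p + (∑ i, truncDigit p (A i) e + 1) := by
    rw [mul_sum, ← add_assoc, ← sum_add_distrib]
    simp only [truncDigit, Nat.div_add_mod]
  rw [hsplit, Nat.dvd_add_right (dvd_mul_right _ _)]

theorem carryFree_truncNum (hp : 0 < p) {e : ℕ} (h : ∀ s ≤ e, ∑ i, truncDigit p (A i) s < p) :
    CarryFree p fun i => truncNum p (A i) e := by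
  induction e with
  | zero => simp [CarryFree]
  | succ e ih =>
    simp only [truncNum_succ hp]
    exact (ih fun s hs => h s (by omega)).mul_add (h _ le_rfl)

theorem exists_le_sum_eq (c : ι → ℕ) {n : ℕ} (hn : n ≤ ∑ i, c i) : ∃ r ≤ c, ∑ i, r i = n := by
  obtain ⟨r, hrc, hr⟩ := Finsupp.exists_le_degree_eq (Finsupp.equivFunOnFinite.symm c) n
    (by simpa [Finsupp.degree_eq_sum] using hn)
  exact ⟨r, hrc, by rw [← hr, Finsupp.degree_eq_sum]⟩

theorem exists_carryFree_lt_truncNum_of_carry (hp : 0 < p) {L : ℕ}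
    (hfree : ∀ e ≤ L, ∑ i, truncDigit p (A i) e < p)
    (hcarry : p ≤ ∑ i, truncDigit p (A i) (L + 1)) :
    ∃ c : ι → ℕ, CarryFree p c ∧ (c < fun i => truncNum p (A i) (L + 1)) ∧
      ∑ i, c i + 1 = p * (∑ i, truncNum p (A i) L + 1) := by
  obtain ⟨r, hr, hrsum⟩ := exists_le_sum_eq (fun i => truncDigit p (A i) (L + 1))
    (n := p - 1) (by omega)
  obtain ⟨j, -, hj⟩ := exists_lt_of_sum_lt (s := univ) (f := r)
    (g := fun i => truncDigit p (A i) (L + 1)) (by omega)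
  refine ⟨fun i => p * truncNum p (A i) L + r i,
    (carryFree_truncNum hp hfree).mul_add (by omega), Pi.lt_def.mpr ⟨fun i => ?_, j, ?_⟩, ?_⟩
  · simpa only [truncNum_succ hp] using Nat.add_le_add_left (hr i) _
  · simpa only [truncNum_succ hp] using Nat.add_lt_add_left hj _
  · rw [sum_add_distrib, hrsum, ← mul_sum, mul_add]
    omega

theorem exists_carryFree_lt_truncNum_succ (hp : 0 < p) {c : ι → ℕ} {e : ℕ} (hc : CarryFree p c)
    (hlt : c < fun i => truncNum p (A i) e) :
    ∃ c' : ι → ℕ, CarryFree p c' ∧ (c' < fun i => truncNum p (A i) (e + 1)) ∧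
      ∑ i, c' i + 1 = p * (∑ i, c i + 1) := by
  classical
  -- Some `c j` is already below its bound, so the digit `p - 1` can be appended to it.
  obtain ⟨hle, j, hj⟩ := Pi.lt_def.mp hlt
  have hsum : ∑ i, (Pi.single j (p - 1) : ι → ℕ) i = p - 1 := by simp
  have hlt_j : p * c j + (p - 1) < truncNum p (A j) (e + 1) := by
    have := Nat.mul_le_mul_left p (Nat.succ_le_of_lt hj)
    rw [Nat.mul_succ] at this
    rw [truncNum_succ hp]
    omega
  refine ⟨fun i => p * c i + (Pi.single j (p - 1) : ι → ℕ) i, hc.mul_add (by omega),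
    Pi.lt_def.mpr ⟨fun i => ?_, j, by simpa using hlt_j⟩, ?_⟩
  · obtain rfl | hij := eq_or_ne i j
    · simpa using hlt_j.le
    · simpa [hij, truncNum_succ hp] using
        (Nat.mul_le_mul_left p (hle i)).trans (Nat.le_add_right _ _)
  · rw [sum_add_distrib, hsum, ← mul_sum, mul_add]
    omega

theorem exists_carryFree_lt_truncNum_add (hp : 0 < p) {L : ℕ}
    (hfree : ∀ e ≤ L, ∑ i, truncDigit p (A i) e < p)
    (hcarry : p ≤ ∑ i, truncDigit p (A i) (L + 1)) (u : ℕ) :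
    ∃ c : ι → ℕ, CarryFree p c ∧ (c < fun i => truncNum p (A i) (L + (u + 1))) ∧
      ∑ i, c i + 1 = p ^ (u + 1) * (∑ i, truncNum p (A i) L + 1) := by
  induction u with
  | zero => simpa using exists_carryFree_lt_truncNum_of_carry hp hfree hcarry
  | succ u ih =>
    obtain ⟨c, hc, hlt, hsum⟩ := ih
    obtain ⟨c', hc', hlt', hsum'⟩ := exists_carryFree_lt_truncNum_succ hp hc hlt
    exact ⟨c', hc', hlt', by rw [hsum', hsum, pow_succ' p (u + 1), mul_assoc]⟩

theorem exists_not_dvd_sum_truncNum_add_one (hp : 0 < p) {d L : ℕ} (hdL : d ≤ L)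
    (hd : ∑ i, truncDigit p (A i) d + 1 < p)
    (hfree : ∀ e ≤ L, ∑ i, truncDigit p (A i) e < p) :
    ∃ L', d ≤ L' ∧ ¬ p ∣ ∑ i, truncNum p (A i) L' + 1 ∧
      ((∑ i, truncNum p (A i) L + 1 : ℕ) : ℚ) / (p : ℚ) ^ L =
        ((∑ i, truncNum p (A i) L' + 1 : ℕ) : ℚ) / (p : ℚ) ^ L' := by
  induction L, hdL using Nat.le_induction with
  | base =>
    refine ⟨d, le_rfl, fun hdvd => ?_, rfl⟩
    rw [dvd_sum_truncNum_add_one_iff] at hdvd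
    exact hd.not_ge (Nat.le_of_dvd (Nat.succ_pos _) hdvd)
  | succ L hdL ih =>
    by_cases hdvd : p ∣ ∑ i, truncNum p (A i) (L + 1) + 1
    · have hdigit : ∑ i, truncDigit p (A i) (L + 1) + 1 = p :=
        (Nat.succ_le_of_lt (hfree _ le_rfl)).antisymm
          (Nat.le_of_dvd (Nat.succ_pos _) ((dvd_sum_truncNum_add_one_iff _ _ _).mp hdvd))
      have hmul : ∑ i, truncNum p (A i) (L + 1) + 1 = p * (∑ i, truncNum p (A i) L + 1) := by
        rw [sum_truncNum_succ hp, add_assoc, hdigit, mul_add, mul_one]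
      have hp0 : (p : ℚ) ≠ 0 := mod_cast hp.ne'
      rw [hmul, pow_succ', Nat.cast_mul, mul_div_mul_left _ _ hp0]
      exact ih fun e he => hfree e (by omega)
    · exact ⟨L + 1, by omega, hdvd, rfl⟩

end TruncSum

section DiagonalPoly

variable {p : ℕ} {k : Type*} [CommSemiring k] {σ : Type*} [Fintype σ]

/-- The diagonal polynomial `∑ i, x_i ^ (A i)`, of which `f_n` is a special case. -/
noncomputable def diagonalPoly (k : Type*) [CommSemiring k] (A : σ → ℕ) : MvPolynomial σ k :=
  ∑ i, X i ^ A i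

theorem diagonalPoly_pow [DecidableEq σ] (A : σ → ℕ) (N : ℕ) :
    diagonalPoly k A ^ N = ∑ c ∈ piAntidiag univ N,
      monomial (Finsupp.equivFunOnFinite.symm (A * c)) (Nat.multinomial univ c : k) := by
  rw [diagonalPoly, sum_pow_eq_sum_piAntidiag]
  refine sum_congr rfl fun c _ => ?_
  rw [monomial_eq, Finsupp.prod_fintype _ _ (by simp)]
  simp [pow_mul]

theorem mem_support_diagonalPoly_pow_iff [CharP k p] {A : σ → ℕ} (hA : ∀ i, 0 < A i) {N : ℕ}
    {s : σ →₀ ℕ} :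
    s ∈ (diagonalPoly k A ^ N).support ↔ ∃ c : σ → ℕ, ∑ i, c i = N ∧
      ¬ p ∣ Nat.multinomial univ c ∧ ∀ i, s i = A i * c i := by
  classical
  have hinj {c c' : σ → ℕ} (h : A * c = A * c') : c = c' :=
    funext fun i => Nat.eq_of_mul_eq_mul_left (hA i) (congrFun h i)
  simp only [mem_support_iff, diagonalPoly_pow, coeff_sum, coeff_monomial]
  constructor
  · intro hs
    obtain ⟨c, hc, hne⟩ := exists_ne_zero_of_sum_ne_zero hs
    obtain ⟨rfl, hcast⟩ := ite_ne_right_iff.mp hne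
    exact ⟨c, (mem_piAntidiag.mp hc).1, (CharP.cast_eq_zero_iff k p _).not.mp hcast, fun _ => rfl⟩
  · rintro ⟨c, hc, hndvd, hs⟩
    obtain rfl : Finsupp.equivFunOnFinite.symm (A * c) = s := Finsupp.ext fun i => (hs i).symm
    rw [sum_eq_single_of_mem c (by simp [hc])
      fun c' _ hne => if_neg fun h => hne (hinj (Finsupp.equivFunOnFinite.symm.injective h)),
      if_pos rfl]
    exact (CharP.cast_eq_zero_iff k p _).not.mpr hndvd

end DiagonalPoly

section FPureThreshold

variable {p : ℕ} {k : Type*} [CommRing k]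

theorem notMem_frobeniusPower_iff {m q : ℕ} {f : MvPolynomial (Fin m) k} :
    f ∉ frobeniusPower k m q ↔ ∃ s ∈ f.support, ∀ i, s i < q := by
  have hspan : frobeniusPower k m q = Ideal.span ((fun s => monomial s (1 : k)) ''
      Set.range fun i : Fin m => Finsupp.single i q) := by
    rw [frobeniusPower, ← Set.range_comp]
    simp only [Function.comp_def, X_pow_eq_monomial]
  rw [hspan, mem_ideal_span_monomial_image]
  simp

/-- `x` is the F-pure threshold `lim ν_f(p ^ e) / p ^ e` of `f` in characteristic `p`. The
existence of the limit is part of the assertion. -/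
def IsFPureThreshold {m : ℕ} (p : ℕ) (f : MvPolynomial (Fin m) k) (x : ℝ) : Prop :=
  Tendsto (fun e : ℕ => (nu f (p ^ e) : ℝ) / (p : ℝ) ^ e) atTop (nhds x)

variable [CharP k p] {m : ℕ} {A : Fin m → ℕ}

theorem diagonalPoly_pow_notMem_frobeniusPower_iff (hp : p.Prime) (hA : ∀ i, 0 < A i)
    {e N : ℕ} :
    diagonalPoly k A ^ N ∉ frobeniusPower k m (p ^ e) ↔
      ∃ c : Fin m → ℕ, CarryFree p c ∧ (c ≤ fun i => truncNum p (A i) e) ∧ ∑ i, c i = N := by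
  simp only [notMem_frobeniusPower_iff, mem_support_diagonalPoly_pow_iff (p := p) hA,
    not_dvd_multinomial_iff_carryFree hp, Pi.le_def, le_truncNum_iff hp.pos (hA _)]
  constructor
  · rintro ⟨s, ⟨c, hN, hc, hs⟩, hlt⟩
    exact ⟨c, hc, fun i => hs i ▸ hlt i, hN⟩
  · rintro ⟨c, hc, hlt, hN⟩
    exact ⟨Finsupp.equivFunOnFinite.symm (A * c), ⟨c, hN, hc, fun _ => rfl⟩, hlt⟩

theorem lt_of_diagonalPoly_pow_notMem_frobeniusPower (hp : p.Prime) (hA : ∀ i, 0 < A i)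
    {e t N : ℕ} (hN : diagonalPoly k A ^ N ∉ frobeniusPower k m (p ^ (e + t))) :
    N < p ^ t * (∑ i, truncNum p (A i) e + 1) := by
  obtain ⟨c, hc, hle, rfl⟩ := (diagonalPoly_pow_notMem_frobeniusPower_iff hp hA).mp hN
  rw [mul_comm, ← Nat.div_lt_iff_lt_mul (pow_pos hp.pos t), Nat.lt_succ_iff, ← hc t]
  refine sum_le_sum fun i _ => ?_
  rw [← truncNum_add_div_pow hp.pos e t]
  exact Nat.div_le_div_right (hle i)

theorem nu_diagonalPoly_of_carryFree (hp : p.Prime) (hA : ∀ i, 0 < A i) {e : ℕ}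
    (hfree : ∀ s ≤ e, ∑ i, truncDigit p (A i) s < p) :
    nu (diagonalPoly k A) (p ^ e) = ∑ i, truncNum p (A i) e := by
  refine IsGreatest.csSup_eq ⟨?_, fun N hN => ?_⟩
  · exact (diagonalPoly_pow_notMem_frobeniusPower_iff hp hA).mpr
      ⟨_, carryFree_truncNum hp.pos hfree, le_rfl, rfl⟩
  · simpa [Nat.lt_succ_iff] using
      lt_of_diagonalPoly_pow_notMem_frobeniusPower (t := 0) hp hA hN

theorem nu_diagonalPoly_add_one_of_carry (hp : p.Prime) (hA : ∀ i, 0 < A i) {L : ℕ}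
    (hfree : ∀ e ≤ L, ∑ i, truncDigit p (A i) e < p)
    (hcarry : p ≤ ∑ i, truncDigit p (A i) (L + 1)) (u : ℕ) :
    nu (diagonalPoly k A) (p ^ (L + (u + 1))) + 1 =
      p ^ (u + 1) * (∑ i, truncNum p (A i) L + 1) := by
  obtain ⟨c, hc, hlt, hsum⟩ := exists_carryFree_lt_truncNum_add hp.pos hfree hcarry u
  rw [← hsum, Nat.add_right_cancel_iff]
  refine IsGreatest.csSup_eq ⟨?_, fun N hN => ?_⟩
  · exact (diagonalPoly_pow_notMem_frobeniusPower_iff hp hA).mpr ⟨c, hc, hlt.le, rfl⟩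
  · have := lt_of_diagonalPoly_pow_notMem_frobeniusPower hp hA hN
    omega

theorem isFPureThreshold_diagonalPoly_of_carryFree (hp : p.Prime) (hA : ∀ i, 0 < A i)
    (hfree : ∀ e, ∑ i, truncDigit p (A i) e < p) :
    IsFPureThreshold p (diagonalPoly k A) (∑ i, 1 / (A i : ℝ)) := by
  simp only [IsFPureThreshold, nu_diagonalPoly_of_carryFree hp hA fun e _ => hfree e,
    Nat.cast_sum, sum_div]
  exact tendsto_finsetSum _ fun i _ => tendsto_truncNum_div_pow hp.one_lt (hA i)

theorem isFPureThreshold_diagonalPoly_of_carry (hp : p.Prime) (hA : ∀ i, 0 < A i) {L : ℕ}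
    (hfree : ∀ e ≤ L, ∑ i, truncDigit p (A i) e < p)
    (hcarry : p ≤ ∑ i, truncDigit p (A i) (L + 1)) :
    IsFPureThreshold p (diagonalPoly k A)
      (((∑ i, truncNum p (A i) L + 1 : ℕ) : ℝ) / (p : ℝ) ^ L) := by
  have hp0 : (p : ℝ) ≠ 0 := mod_cast hp.ne_zero
  have hlim := (tendsto_const_nhds
    (x := ((∑ i, truncNum p (A i) L + 1 : ℕ) : ℝ) / (p : ℝ) ^ L)).sub
    ((tendsto_inv_pow_atTop_zero hp.one_lt).comp (tendsto_add_atTop_nat (L + 1)))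
  rw [sub_zero] at hlim
  refine (tendsto_add_atTop_iff_nat (L + 1)).mp (hlim.congr fun u => ?_)
  have hnu : (nu (diagonalPoly k A) (p ^ (u + (L + 1))) : ℝ) + 1 =
      (p : ℝ) ^ (u + 1) * (∑ i, truncNum p (A i) L + 1 : ℕ) := by
    rw [add_left_comm]
    exact_mod_cast nu_diagonalPoly_add_one_of_carry (k := k) hp hA hfree hcarry u
  rw [eq_sub_of_add_eq hnu, Function.comp_apply, show u + (L + 1) = (u + 1) + L by ring, pow_add]
  field_simp

theorem eq_sum_or_exists_carry_of_isFPureThreshold_diagonalPoly (hp : p.Prime)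
    (hA : ∀ i, 0 < A i) {F : ℚ} (hF : IsFPureThreshold p (diagonalPoly k A) F) :
    F = ∑ i, 1 / (A i : ℚ) ∨ ∃ L, (∀ e ≤ L, ∑ i, truncDigit p (A i) e < p) ∧
      p ≤ ∑ i, truncDigit p (A i) (L + 1) ∧
        F = ((∑ i, truncNum p (A i) L + 1 : ℕ) : ℚ) / (p : ℚ) ^ L := by
  by_cases h : ∀ e, ∑ i, truncDigit p (A i) e < p
  · left
    rw [← Rat.cast_inj (α := ℝ),
      tendsto_nhds_unique hF (isFPureThreshold_diagonalPoly_of_carryFree hp hA h)]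
    push_cast
    rfl
  · right
    have hex : ∃ e, p ≤ ∑ i, truncDigit p (A i) (e + 1) := by
      obtain ⟨e, he⟩ := not_forall.mp h
      obtain _ | e := e
      · simp [hp.pos] at he
      · exact ⟨e, not_lt.mp he⟩
    classical
    have hcarry := Nat.find_spec hex
    have hfree : ∀ e ≤ Nat.find hex, ∑ i, truncDigit p (A i) e < p := by
      rintro (_ | e) he
      · simp [hp.pos]
      · exact not_le.mp (Nat.find_min hex he)
    refine ⟨Nat.find hex, hfree, hcarry, ?_⟩
    rw [← Rat.cast_inj (α := ℝ),
      tendsto_nhds_unique hF (isFPureThreshold_diagonalPoly_of_carry hp hA hfree hcarry)]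
    push_cast
    rfl

theorem den_natCast_div_pow_of_not_dvd (hp : p.Prime) {N : ℕ} (hN : ¬ p ∣ N) (L : ℕ) :
    ((N : ℚ) / (p : ℚ) ^ L).den = p ^ L := by
  have hcop : N.Coprime (p ^ L) := (hp.coprime_iff_not_dvd.mpr hN).symm.pow_right L
  have hden := Rat.den_div_eq_of_coprime (a := N) (b := (p ^ L : ℕ))
    (mod_cast pow_pos hp.pos L) (by simpa only [Int.natAbs_natCast] using hcop)
  rw [Int.cast_natCast, Int.cast_natCast, Nat.cast_pow] at hden
  exact_mod_cast hden

theorem eq_sum_or_den_eq_pow_of_isFPureThreshold_diagonalPoly (hp : p.Prime)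
    (hA : ∀ i, 0 < A i) {d : ℕ} (hd : ∀ e ≤ d, ∑ i, truncDigit p (A i) e + 1 < p) {F : ℚ}
    (hF : IsFPureThreshold p (diagonalPoly k A) F) :
    F = ∑ i, 1 / (A i : ℚ) ∨ ∃ L, d ≤ L ∧
      F = ∑ i, trunc p (1 / (A i : ℚ)) L + 1 / (p : ℚ) ^ L ∧ F.den = p ^ L := by
  refine (eq_sum_or_exists_carry_of_isFPureThreshold_diagonalPoly hp hA hF).imp_right ?_
  rintro ⟨L, hfree, hcarry, rfl⟩
  have hdL : d ≤ L := by
    by_contra! hLd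
    have := hd (L + 1) hLd
    omega
  obtain ⟨L', hdL', hndvd, hvalue⟩ :=
    exists_not_dvd_sum_truncNum_add_one hp.pos hdL (hd d le_rfl) hfree
  refine ⟨L', hdL', ?_, hvalue ▸ den_natCast_div_pow_of_not_dvd hp hndvd L'⟩
  rw [hvalue]
  simp only [trunc_one_div hp.pos (hA _), ← sum_div, ← add_div, Nat.cast_succ, Nat.cast_sum]

end FPureThreshold

section TwoDistinguishedExponents

theorem div_add_div_lt_self {q a b : ℕ} (hq : 0 < q) (ha : 1 < a) (hb : 1 < b)
    (hne : ¬(a = 2 ∧ b = 2)) : q / a + q / b < q := by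
  have hle {s t : ℕ} (ht : 0 < t) (hts : t ≤ s) : q / s ≤ q / t := Nat.div_le_div_left hts ht
  obtain ha3 | hb3 : 3 ≤ a ∨ 3 ≤ b := by omega
  · have := hle three_pos ha3
    have := hle two_pos hb
    omega
  · have := hle two_pos ha
    have := hle three_pos hb3
    omega

/-- The exponents `a, b, n, n, …` of the variables in `f_n`. -/
def fnExponent (a b n i : ℕ) : ℕ :=
  if i = 0 then a else if i = 1 then b else n

variable {a b n : ℕ}

theorem sum_fnExponent {M : Type*} [AddCommMonoid M] (g : ℕ → M) (m : ℕ) :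
    ∑ i : Fin (m + 2), g (fnExponent a b n i) = g a + (g b + m • g n) := by
  simp [Fin.sum_univ_succ, fnExponent]

theorem fnExponent_pos (ha : 0 < a) (hb : 0 < b) (hn : 0 < n) (i : ℕ) : 0 < fnExponent a b n i := by
  unfold fnExponent
  split_ifs <;> assumption

theorem sum_truncDigit_fnExponent_add_one_lt {p d m : ℕ} (hp : 1 < p) (ha : 1 < a) (hb : 1 < b)
    (hne : ¬(a = 2 ∧ b = 2)) (hap : a ∣ p - 1) (hbp : b ∣ p - 1) (hdn : p ^ d ≤ n) {e : ℕ}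
    (he : e ≤ d) : ∑ i : Fin (m + 2), truncDigit p (fnExponent a b n i) e + 1 < p := by
  have hp0 : 0 < p := by omega
  obtain _ | e := e
  · simpa using hp
  have hn : truncDigit p n (e + 1) = 0 := by
    rw [truncDigit, truncNum_eq_zero_of_pow_le hp0 ((Nat.pow_le_pow_right hp0 he).trans hdn),
      Nat.zero_mod]
  rw [sum_fnExponent fun c => truncDigit p c (e + 1), truncDigit_succ_of_dvd hap hp0,
    truncDigit_succ_of_dvd hbp hp0, hn, smul_zero]
  have := div_add_div_lt_self (q := p - 1) (by omega) ha hb hne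
  omega

theorem dvd_sub_one_and_dvd_sub_one_of_modEq_one {p : ℕ} (hp : 0 < p)
    (h : (p : ℤ) ≡ 1 [ZMOD (Nat.lcm a b : ℤ)]) : a ∣ p - 1 ∧ b ∣ p - 1 := by
  rw [← Nat.lcm_dvd_iff, ← Nat.modEq_iff_dvd' hp]
  exact_mod_cast h.symm

end TwoDistinguishedExponents

theorem stmt4_general {p m n a b d : ℕ} (hp : p.Prime) {k : Type*} [CommRing k] [CharP k p]
    (hm : 2 ≤ m) (ha : 1 < a) (hb : 1 < b) (hne : ¬(a = 2 ∧ b = 2))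
    (hpmod : (p : ℤ) ≡ 1 [ZMOD (Nat.lcm a b : ℤ)]) (hdn : p ^ d ≤ n) (F : ℚ)
    (hF : Tendsto (fun e : ℕ =>
        (nu (∑ i : Fin m, (X i : MvPolynomial (Fin m) k) ^
            (if (i : ℕ) = 0 then a else if (i : ℕ) = 1 then b else n)) (p ^ (e + 1)) : ℝ) /
          (p : ℝ) ^ (e + 1))
      atTop (nhds (F : ℝ))) :
    F = 1 / (a : ℚ) + 1 / (b : ℚ) + ((m : ℚ) - 2) / (n : ℚ) ∨
      ∃ L : ℕ, d ≤ L ∧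
        F = trunc p (1 / (a : ℚ)) L + trunc p (1 / (b : ℚ)) L +
          ((m : ℚ) - 2) * trunc p (1 / (n : ℚ)) L + 1 / (p : ℚ) ^ L ∧
        F.den = p ^ L := by
  obtain ⟨m, rfl⟩ := Nat.exists_eq_add_of_le' hm
  obtain ⟨hap, hbp⟩ := dvd_sub_one_and_dvd_sub_one_of_modEq_one hp.pos hpmod
  have hA (i : Fin (m + 2)) : 0 < fnExponent a b n i :=
    fnExponent_pos (by omega) (by omega) ((pow_pos hp.pos d).trans_le hdn) i
  have hcast : ((m + 2 : ℕ) : ℚ) - 2 = m := by push_cast; ring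
  have hfpt := eq_sum_or_den_eq_pow_of_isFPureThreshold_diagonalPoly (k := k) (F := F) hp hA
    (fun e => sum_truncDigit_fnExponent_add_one_lt hp.one_lt ha hb hne hap hbp hdn)
    ((tendsto_add_atTop_iff_nat 1).mp hF)
  have hsum (g : ℚ → ℚ) : ∑ i : Fin (m + 2), g (1 / (fnExponent a b n i : ℚ)) =
      g (1 / a) + g (1 / b) + m * g (1 / n) := by
    rw [sum_fnExponent fun c : ℕ => g (1 / c), nsmul_eq_mul, add_assoc]
  have hsum_trunc (L : ℕ) := hsum fun x => trunc p x L
  rw [hcast, ← mul_one_div (m : ℚ)]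
  simpa only [hsum fun x => x, hsum_trunc] using hfpt

/-- For `f_n = x_1^a + x_2^b + x_3^n + … + x_m^n`, if `p ≡ 1 (mod lcm(a,b))` and
`p^d ≤ n < p^{d+1}` with `d ≥ 1`, then either `fpt(f_n) = 1/a + 1/b + (m-2)/n`,
or there is `L ≥ d` with
`fpt(f_n) = ⟨1/a⟩_L + ⟨1/b⟩_L + (m-2)⟨1/n⟩_L + p^{-L}`, in which case the
denominator of `fpt(f_n)` in lowest terms is `p^L`. -/
theorem stmt4 {p m n a b d : ℕ} (hp : p.Prime) {k : Type*} [Field k] [PerfectField k]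
    [CharP k p] (hm : 2 < m)
    (ha : 1 < a) (hab : a ≤ b) (hne : ¬(a = 2 ∧ b = 2)) (hn : b ≤ n)
    (hpmod : (p : ℤ) ≡ 1 [ZMOD (Nat.lcm a b : ℤ)])
    (hd : 0 < d) (hdn : p ^ d ≤ n) (hnd : n < p ^ (d + 1))
    (F : ℚ)
    (hF : Tendsto (fun e : ℕ =>
        (nu (∑ i : Fin m, (X i : MvPolynomial (Fin m) k) ^
            (if (i : ℕ) = 0 then a else if (i : ℕ) = 1 then b else n)) (p ^ (e + 1)) : ℝ) /
          (p : ℝ) ^ (e + 1))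
      atTop (nhds (F : ℝ))) :
    F = 1 / (a : ℚ) + 1 / (b : ℚ) + ((m : ℚ) - 2) / (n : ℚ) ∨
      ∃ L : ℕ, d ≤ L ∧
        F = trunc p (1 / (a : ℚ)) L + trunc p (1 / (b : ℚ)) L +
          ((m : ℚ) - 2) * trunc p (1 / (n : ℚ)) L + 1 / (p : ℚ) ^ L ∧
        F.den = p ^ L :=
  stmt4_general hp hm.le ha (ha.trans_le hab) hne hpmod hdn F hF
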